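/- Let T : ℝ² → ℝ be a smooth field of symmetric trace-free 2×2 matrices (T₁₁ + T₂₂ = 0, T₁₂ = T₂₁) such that for every multi-index β one has ∂^β T_{ij}(x) = o(|x|^{−3/2−|β|}) as |x| → ∞, for all i,j. Then there exists a unique smooth vector field β : ℝ² → ℝ² with β(x) → 0 as |x| → ∞ satisfying the flat conformal Killing equation ∂_i β_j + ∂_j β_i − δ_{ij}(∂₁β₁ + ∂₂β₂) = T_{ij} on ℝ². Moreover this solution satisfies β(x) = o(|x|^{−1/2}) as |x| → ∞. -/

import Mathlib

open Real Filter Asymptotics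

noncomputable section

/-- Partial derivative of a scalar function on ℝ² in the i-th coordinate direction. -/
def pd2 (i : Fin 2) (g : EuclideanSpace ℝ (Fin 2) → ℝ) (x : EuclideanSpace ℝ (Fin 2)) : ℝ :=
  fderiv ℝ g x (EuclideanSpace.single i 1)

/-- The flat conformal Killing operator applied to a vector field β on ℝ² :
`(𝓛β)_{ij} = ∂_i β_j + ∂_j β_i − δ_{ij} ∂_c β^c`. -/
def confKilling (β : EuclideanSpace ℝ (Fin 2) → EuclideanSpace ℝ (Fin 2))
    (x : EuclideanSpace ℝ (Fin 2)) (i j : Fin 2) : ℝ :=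
  pd2 i (fun y => β y j) x + pd2 j (fun y => β y i) x -
    (if i = j then 1 else 0) * ∑ c, pd2 c (fun y => β y c) x

/-- The Cauchy transform of `h`, without the customary factor `π⁻¹`. -/
def cauchyTransform {E : Type*} [NormedAddCommGroup E] [NormedSpace ℝ E] [NormedSpace ℂ E]
    (h : ℂ → E) (z : ℂ) : E :=
  ∫ w : ℂ, w⁻¹ • h (z - w)

/-- Smooth functions all of whose derivatives are `O((1 + |x|) ^ (-3/2))`. -/
def SmoothDecay {E : Type*} [NormedAddCommGroup E] [NormedSpace ℝ E] (h : ℂ → E) : Prop :=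
  ContDiff ℝ (⊤ : ℕ∞) h ∧
    ∀ m : ℕ, ∃ C : ℝ, ∀ x, ‖iteratedFDeriv ℝ m h x‖ ≤ C * (1 + ‖x‖) ^ (-3/2 : ℝ)

section Kernels

open MeasureTheory Set

lemma integrableOn_one_add_rpow :
    IntegrableOn (fun r : ℝ => (1 + r) ^ (-3/2 : ℝ)) (Ioi 0) := by
  simpa only [add_comm] using
    integrableOn_add_rpow_Ioi_of_lt (a := -3/2) (m := 1) (c := 0) (by norm_num) (by norm_num)

lemma integrable_inv_norm_mul_one_add_rpow :
    Integrable fun w : ℂ => ‖w‖⁻¹ * (1 + ‖w‖) ^ (-3/2 : ℝ) := by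
  rw [integrable_fun_norm_addHaar volume (f := fun r : ℝ => r⁻¹ * (1 + r) ^ (-3/2 : ℝ))]
  refine integrableOn_one_add_rpow.congr_fun (fun r hr => ?_) measurableSet_Ioi
  have hr : r ≠ 0 := (mem_Ioi.1 hr).ne'
  simp [Complex.finrank_real_complex, hr]

lemma integrable_norm_rpow_mul_inv_one_add :
    Integrable fun w : ℂ => ‖w‖ ^ (-3/2 : ℝ) * (1 + ‖w‖)⁻¹ := by
  rw [integrable_fun_norm_addHaar volume (f := fun r : ℝ => r ^ (-3/2 : ℝ) * (1 + r)⁻¹)]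
  have hmeas : Measurable fun r : ℝ =>
      r ^ (Module.finrank ℝ ℂ - 1) • (r ^ (-3/2 : ℝ) * (1 + r)⁻¹) := by
    fun_prop
  have hval : ∀ r : ℝ, 0 < r →
      ‖r ^ (Module.finrank ℝ ℂ - 1) • (r ^ (-3/2 : ℝ) * (1 + r)⁻¹)‖
        = r ^ (-1/2 : ℝ) * (1 + r)⁻¹ := by
    intro r hr
    have h1 : r ^ (-1/2 : ℝ) = r * r ^ (-3/2 : ℝ) := by
      rw [show (-1/2 : ℝ) = 1 + -3/2 by norm_num, rpow_add hr, rpow_one]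
    rw [Real.norm_of_nonneg (by positivity), Complex.finrank_real_complex, h1]
    simp [mul_assoc]
  rw [← Ioc_union_Ioi_eq_Ioi (zero_le_one' ℝ)]
  refine IntegrableOn.union ?_ ?_
  · have h := (intervalIntegrable_iff_integrableOn_Ioc_of_le zero_le_one).1
      (intervalIntegral.intervalIntegrable_rpow' (a := 0) (b := 1) (r := -1/2) (by norm_num))
    refine Integrable.mono' h hmeas.aestronglyMeasurable ?_
    refine (ae_restrict_iff' measurableSet_Ioc).2 (ae_of_all _ fun r hr => ?_)
    rw [hval r hr.1]
    have h0 := hr.1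
    exact mul_le_of_le_one_right (by positivity) (inv_le_one_of_one_le₀ (by linarith))
  · have h := integrableOn_Ioi_rpow_of_lt (a := -3/2) (c := 1) (by norm_num) one_pos
    refine Integrable.mono' h hmeas.aestronglyMeasurable ?_
    refine (ae_restrict_iff' measurableSet_Ioi).2 (ae_of_all _ fun r hr => ?_)
    have h0 : 0 < r := zero_lt_one.trans hr
    rw [hval r h0, show (-3/2 : ℝ) = -1/2 + -1 by norm_num, rpow_add h0, rpow_neg_one]
    gcongr
    linarith

lemma norm_one_sub_rpow_mul_inv_norm_le {u : ℂ} (hu : u ≠ 0) (hu1 : 1 - u ≠ 0) :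
    ‖1 - u‖ ^ (-3/2 : ℝ) * ‖u‖⁻¹ ≤
      (3 : ℝ) ^ (3/2 : ℝ) * (‖u‖⁻¹ * (1 + ‖u‖) ^ (-3/2 : ℝ)) +
        3 * (‖1 - u‖ ^ (-3/2 : ℝ) * (1 + ‖1 - u‖)⁻¹) := by
  have h0 : 0 < ‖u‖ := norm_pos_iff.2 hu
  have h1 : 0 < ‖1 - u‖ := norm_pos_iff.2 hu1
  have htri : (1 : ℝ) ≤ ‖1 - u‖ + ‖u‖ := by
    simpa using norm_add_le (1 - u) u
  rcases le_total ‖u‖ ‖1 - u‖ with h | h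
  · have hle : (1 + ‖u‖) / 3 ≤ ‖1 - u‖ := by linarith
    have hpow := rpow_le_rpow_of_nonpos (by positivity) hle (show (-3/2 : ℝ) ≤ 0 by norm_num)
    have hdiv : ((1 + ‖u‖) / 3) ^ (-3/2 : ℝ) = 3 ^ (3/2 : ℝ) * (1 + ‖u‖) ^ (-3/2 : ℝ) := by
      rw [div_rpow (by positivity) (by norm_num), div_eq_mul_inv, ← rpow_neg (by norm_num)]
      norm_num [mul_comm]
    rw [hdiv] at hpow
    calc ‖1 - u‖ ^ (-3/2 : ℝ) * ‖u‖⁻¹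
        ≤ (3 ^ (3/2 : ℝ) * (1 + ‖u‖) ^ (-3/2 : ℝ)) * ‖u‖⁻¹ := by gcongr
      _ = 3 ^ (3/2 : ℝ) * (‖u‖⁻¹ * (1 + ‖u‖) ^ (-3/2 : ℝ)) := by ring
      _ ≤ _ := le_add_of_nonneg_right (by positivity)
  · have hinv : ‖u‖⁻¹ ≤ 3 * (1 + ‖1 - u‖)⁻¹ := by
      rw [← div_eq_mul_inv, inv_le_comm₀ h0 (by positivity), inv_div]
      linarith
    calc ‖1 - u‖ ^ (-3/2 : ℝ) * ‖u‖⁻¹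
        ≤ ‖1 - u‖ ^ (-3/2 : ℝ) * (3 * (1 + ‖1 - u‖)⁻¹) := by gcongr
      _ = 3 * (‖1 - u‖ ^ (-3/2 : ℝ) * (1 + ‖1 - u‖)⁻¹) := by ring
      _ ≤ _ := le_add_of_nonneg_left (by positivity)

lemma ae_ne_and_one_sub_ne : ∀ᵐ u : ℂ, u ≠ 0 ∧ 1 - u ≠ 0 := by
  filter_upwards [Measure.ae_ne volume (0 : ℂ), Measure.ae_ne volume (1 : ℂ)] with u h0 h1
  exact ⟨h0, sub_ne_zero.2 h1.symm⟩

lemma integrable_norm_one_sub_rpow_mul_inv_norm :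
    Integrable fun u : ℂ => ‖1 - u‖ ^ (-3/2 : ℝ) * ‖u‖⁻¹ := by
  refine Integrable.mono' ((integrable_inv_norm_mul_one_add_rpow.const_mul (3 ^ (3/2 : ℝ))).add
    ((integrable_norm_rpow_mul_inv_one_add.comp_sub_left 1).const_mul 3))
    (Measurable.aestronglyMeasurable (by fun_prop)) ?_
  filter_upwards [ae_ne_and_one_sub_ne] with u hu
  rw [Real.norm_of_nonneg (by positivity)]
  exact norm_one_sub_rpow_mul_inv_norm_le hu.1 hu.2

end Kernels

section Smoothness

open MeasureTheory Set

variable {E : Type*} [NormedAddCommGroup E] [NormedSpace ℝ E]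

lemma one_add_norm_sub_rpow_le {z w : ℂ} {R : ℝ} (hz : ‖z‖ ≤ R) :
    (1 + ‖z - w‖) ^ (-3/2 : ℝ) ≤ (1 + R) ^ (3/2 : ℝ) * (1 + ‖w‖) ^ (-3/2 : ℝ) := by
  have hR : 0 ≤ R := (norm_nonneg z).trans hz
  have htri : ‖w‖ ≤ ‖z‖ + ‖z - w‖ := by simpa using norm_sub_le z (z - w)
  have hle : (1 + ‖w‖) / (1 + R) ≤ 1 + ‖z - w‖ := by
    rw [div_le_iff₀ (by positivity)]
    nlinarith [norm_nonneg (z - w)]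
  refine (rpow_le_rpow_of_nonpos (by positivity) hle (by norm_num)).trans_eq ?_
  rw [div_rpow (by positivity) (by positivity), div_eq_mul_inv, ← rpow_neg (by positivity),
    mul_comm]
  norm_num

lemma SmoothDecay.contDiff {h : ℂ → E} (hh : SmoothDecay h) : ContDiff ℝ (⊤ : ℕ∞) h := hh.1

lemma SmoothDecay.continuous {h : ℂ → E} (hh : SmoothDecay h) : Continuous h :=
  hh.contDiff.continuous

lemma SmoothDecay.smoothDecay_fderiv {h : ℂ → E} (hh : SmoothDecay h) : SmoothDecay (fderiv ℝ h) := by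
  refine ⟨(contDiff_infty_iff_fderiv.1 hh.1).2, fun m => ?_⟩
  obtain ⟨C, hC⟩ := hh.2 (m + 1)
  exact ⟨C, fun x => by simpa only [norm_iteratedFDeriv_fderiv] using hC x⟩

lemma SmoothDecay.exists_norm_le {h : ℂ → E} (hh : SmoothDecay h) :
    ∃ C : ℝ, 0 ≤ C ∧ ∀ x, ‖h x‖ ≤ C * (1 + ‖x‖) ^ (-3/2 : ℝ) := by
  obtain ⟨C, hC⟩ := hh.2 0
  have hC' : ∀ x, ‖h x‖ ≤ C * (1 + ‖x‖) ^ (-3/2 : ℝ) := by simpa using hC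
  exact ⟨C, by simpa using (norm_nonneg _).trans (hC' 0), hC'⟩

lemma SmoothDecay.exists_norm_sub_le {h : ℂ → E} (hh : SmoothDecay h) (R : ℝ) :
    ∃ C : ℝ, ∀ z : ℂ, ‖z‖ ≤ R → ∀ w, ‖h (z - w)‖ ≤ C * (1 + ‖w‖) ^ (-3/2 : ℝ) := by
  obtain ⟨C, hC0, hC⟩ := hh.exists_norm_le
  refine ⟨C * (1 + R) ^ (3/2 : ℝ), fun z hz w => (hC _).trans ?_⟩
  rw [mul_assoc]
  exact mul_le_mul_of_nonneg_left (one_add_norm_sub_rpow_le hz) hC0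

variable [NormedSpace ℂ E]

lemma SmoothDecay.exists_norm_inv_smul_sub_le {h : ℂ → E} (hh : SmoothDecay h) (R : ℝ) :
    ∃ C : ℝ, ∀ z : ℂ, ‖z‖ ≤ R → ∀ w : ℂ,
      ‖w⁻¹ • h (z - w)‖ ≤ C * (‖w‖⁻¹ * (1 + ‖w‖) ^ (-3/2 : ℝ)) := by
  obtain ⟨C, hC⟩ := hh.exists_norm_sub_le R
  refine ⟨C, fun z hz w => ?_⟩
  rw [norm_smul, norm_inv, mul_left_comm]
  exact mul_le_mul_of_nonneg_left (hC z hz w) (by positivity)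

lemma SmoothDecay.aestronglyMeasurable_inv_smul_sub {h : ℂ → E} (hh : SmoothDecay h) (z : ℂ) :
    AEStronglyMeasurable (fun w : ℂ => w⁻¹ • h (z - w)) volume :=
  measurable_inv.aestronglyMeasurable.smul
    (hh.continuous.comp (continuous_const.sub continuous_id)).aestronglyMeasurable

lemma SmoothDecay.integrable_inv_smul_sub {h : ℂ → E} (hh : SmoothDecay h) (z : ℂ) :
    Integrable (fun w : ℂ => w⁻¹ • h (z - w)) := by
  obtain ⟨C, hC⟩ := hh.exists_norm_inv_smul_sub_le ‖z‖
  exact Integrable.mono' (integrable_inv_norm_mul_one_add_rpow.const_mul C)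
    (hh.aestronglyMeasurable_inv_smul_sub z) (ae_of_all _ fun w => hC z le_rfl w)

variable [IsScalarTower ℝ ℂ E]

lemma SmoothDecay.hasFDerivAt_cauchyTransform {h : ℂ → E} (hh : SmoothDecay h) (z : ℂ) :
    HasFDerivAt (cauchyTransform h) (cauchyTransform (fderiv ℝ h) z) z := by
  obtain ⟨C, hC⟩ := hh.smoothDecay_fderiv.exists_norm_inv_smul_sub_le (‖z‖ + 1)
  refine hasFDerivAt_integral_of_dominated_of_fderiv_le
    (F := fun z w : ℂ => w⁻¹ • h (z - w)) (F' := fun z w : ℂ => w⁻¹ • fderiv ℝ h (z - w))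
    (Metric.ball_mem_nhds z one_pos)
    (.of_forall hh.aestronglyMeasurable_inv_smul_sub) (hh.integrable_inv_smul_sub z)
    (hh.smoothDecay_fderiv.aestronglyMeasurable_inv_smul_sub z) (ae_of_all _ fun w x hx => hC x ?_ w)
    (integrable_inv_norm_mul_one_add_rpow.const_mul C) (ae_of_all _ fun w x _ => ?_)
  · have := norm_sub_norm_le x z
    have := mem_ball_iff_norm.1 hx
    linarith
  · have hd := (hh.contDiff.differentiable (by simp) (x - w)).hasFDerivAt
    exact (hd.comp x ((hasFDerivAt_id x).sub_const w)).const_smul w⁻¹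

end Smoothness

lemma SmoothDecay.contDiff_cauchyTransform_nat (n : ℕ) :
    ∀ {E : Type*} [NormedAddCommGroup E] [NormedSpace ℝ E] [NormedSpace ℂ E]
      [IsScalarTower ℝ ℂ E] {h : ℂ → E}, SmoothDecay h → ContDiff ℝ n (cauchyTransform h) := by
  induction n with
  | zero =>
    intro E _ _ _ _ h hh
    exact contDiff_zero.2 (continuous_iff_continuousAt.2 fun z =>
      (hh.hasFDerivAt_cauchyTransform z).continuousAt)
  | succ n ih =>
    intro E _ _ _ _ h hh
    rw [Nat.cast_add, Nat.cast_one, contDiff_succ_iff_fderiv]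
    refine ⟨fun z => (hh.hasFDerivAt_cauchyTransform z).differentiableAt, by simp, ?_⟩
    rw [funext fun z => (hh.hasFDerivAt_cauchyTransform z).fderiv]
    exact ih hh.smoothDecay_fderiv

lemma SmoothDecay.contDiff_cauchyTransform {E : Type*} [NormedAddCommGroup E] [NormedSpace ℝ E]
    [NormedSpace ℂ E] [IsScalarTower ℝ ℂ E] {h : ℂ → E} (hh : SmoothDecay h) :
    ContDiff ℝ (⊤ : ℕ∞) (cauchyTransform h) :=
  contDiff_infty.2 fun n => SmoothDecay.contDiff_cauchyTransform_nat n hh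

section CauchyPompeiu

open MeasureTheory Set Topology

lemma clm_add_I_mul_clm_I_polar (D : ℂ →L[ℝ] ℂ) {e : ℂ} (he : ‖e‖ = 1) :
    e⁻¹ * (D 1 + Complex.I * D Complex.I) = D e + Complex.I * D (e * Complex.I) := by
  have hsq : ((e.re : ℂ)) ^ 2 + (e.im : ℂ) ^ 2 = 1 := by
    have h := Complex.normSq_eq_norm_sq e
    rw [he, Complex.normSq_apply] at h
    exact_mod_cast (by linarith : e.re ^ 2 + e.im ^ 2 = 1)
  have hlin : ∀ x y : ℝ, D (x + y * Complex.I) = x * D 1 + y * D Complex.I := by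
    intro x y
    have : (x + y * Complex.I : ℂ) = x • (1 : ℂ) + y • Complex.I := by simp
    rw [this, map_add, map_smul, map_smul]
    simp
  have hD1 : D e = e.re * D 1 + e.im * D Complex.I := by
    conv_lhs => rw [← Complex.re_add_im e]
    exact hlin _ _
  have hD2 : D (e * Complex.I) = -e.im * D 1 + e.re * D Complex.I := by
    have : e * Complex.I = ((-e.im : ℝ) : ℂ) + (e.re : ℝ) * Complex.I := by
      apply Complex.ext <;> simp
    rw [this, hlin]
    simp
  have hinv : e⁻¹ = e.re - e.im * Complex.I := by
    rw [Complex.inv_eq_conj he]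
    apply Complex.ext <;> simp
  rw [hD1, hD2, hinv]
  linear_combination (-(e.im : ℂ) * D Complex.I) * Complex.I_sq

lemma SmoothDecay.continuous_fderiv_polar {h : ℂ → ℂ} (hh : SmoothDecay h) (z c : ℂ) :
    Continuous fun p : ℝ × ℝ =>
      fderiv ℝ h (z - p.1 * Complex.exp (p.2 * Complex.I)) (Complex.exp (p.2 * Complex.I) * c) := by
  have hd : Continuous fun p : ℝ × ℝ => fderiv ℝ h (z - p.1 * Complex.exp (p.2 * Complex.I)) :=
    hh.smoothDecay_fderiv.continuous.comp (by fun_prop)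
  exact hd.clm_apply (by fun_prop)

lemma integrableOn_polar_of_norm_le {f : ℝ × ℝ → ℂ} (hf : Continuous f) {C : ℝ}
    (hC : ∀ r, 0 < r → ∀ θ, ‖f (r, θ)‖ ≤ C * (1 + r) ^ (-3/2 : ℝ)) :
    IntegrableOn f (Ioi 0 ×ˢ Ioo (-π) π) := by
  have hb : Integrable (fun p : ℝ × ℝ => (C * (1 + p.1) ^ (-3/2 : ℝ)) * (1 : ℝ))
      ((volume.restrict (Ioi 0)).prod (volume.restrict (Ioo (-π) π))) :=
    Integrable.mul_prod (f := fun r : ℝ => C * (1 + r) ^ (-3/2 : ℝ)) (g := fun _ => (1 : ℝ))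
      (integrableOn_one_add_rpow.const_mul C) (integrable_const 1)
  rw [Measure.prod_restrict] at hb
  refine Integrable.mono' hb hf.aestronglyMeasurable ?_
  refine (ae_restrict_iff' (measurableSet_Ioi.prod measurableSet_Ioo)).2 (ae_of_all _ ?_)
  rintro ⟨r, θ⟩ hp
  simpa using hC r hp.1 θ

lemma SmoothDecay.integrableOn_fderiv_polar {h : ℂ → ℂ} (hh : SmoothDecay h) (z : ℂ) {c : ℂ}
    (hc : ‖c‖ = 1) :
    IntegrableOn (fun p : ℝ × ℝ =>
      fderiv ℝ h (z - p.1 * Complex.exp (p.2 * Complex.I)) (Complex.exp (p.2 * Complex.I) * c))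
      (Ioi 0 ×ˢ Ioo (-π) π) := by
  obtain ⟨C, hC⟩ := hh.smoothDecay_fderiv.exists_norm_sub_le ‖z‖
  refine integrableOn_polar_of_norm_le (hh.continuous_fderiv_polar z c) (C := C) fun r hr θ => ?_
  refine (ContinuousLinearMap.le_opNorm _ _).trans ?_
  have := hC z le_rfl (r * Complex.exp (θ * Complex.I))
  simpa [Complex.norm_exp_ofReal_mul_I, hc, abs_of_pos hr] using this

lemma SmoothDecay.hasDerivAt_ray {h : ℂ → ℂ} (hh : SmoothDecay h) (z e : ℂ) (r : ℝ) :
    HasDerivAt (fun r : ℝ => h (z - r * e)) (-fderiv ℝ h (z - r * e) e) r := by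
  have hd := (hh.contDiff.differentiable (by simp) (z - r * e)).hasFDerivAt
  have hinner : HasDerivAt (fun r : ℝ => z - r * e) (-e) r := by
    simpa using ((Complex.ofRealCLM.hasDerivAt (x := r)).mul_const e).const_sub z
  simpa [Function.comp_def] using hd.comp_hasDerivAt r hinner

lemma SmoothDecay.hasDerivAt_circle {h : ℂ → ℂ} (hh : SmoothDecay h) (z : ℂ) (r θ : ℝ) :
    HasDerivAt (fun θ : ℝ => h (z - r * Complex.exp (θ * Complex.I)))
      (-r * fderiv ℝ h (z - r * Complex.exp (θ * Complex.I))
        (Complex.exp (θ * Complex.I) * Complex.I)) θ := by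
  have hd := (hh.contDiff.differentiable (by simp)
    (z - r * Complex.exp (θ * Complex.I))).hasFDerivAt
  have hinner : HasDerivAt (fun θ : ℝ => z - r * Complex.exp (θ * Complex.I))
      (-(r • (Complex.exp (θ * Complex.I) * Complex.I))) θ := by
    have h1 : HasDerivAt (fun θ : ℝ => (θ : ℂ) * Complex.I) Complex.I θ := by
      simpa using (Complex.ofRealCLM.hasDerivAt (x := θ)).mul_const Complex.I
    simpa using (h1.cexp.const_mul (r : ℂ)).const_sub z
  have := hd.comp_hasDerivAt θ hinner
  rw [map_neg, map_smul] at this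
  simpa [Function.comp_def] using this

lemma SmoothDecay.integral_ray {h : ℂ → ℂ} (hh : SmoothDecay h) (z : ℂ) {e : ℂ} (he : ‖e‖ = 1) :
    ∫ r in Ioi (0 : ℝ), fderiv ℝ h (z - r * e) e = h z := by
  obtain ⟨C, hC⟩ := hh.exists_norm_sub_le ‖z‖
  obtain ⟨C', hC'⟩ := hh.smoothDecay_fderiv.exists_norm_sub_le ‖z‖
  have hcont : Continuous fun r : ℝ => fderiv ℝ h (z - r * e) :=
    hh.smoothDecay_fderiv.continuous.comp (by fun_prop)
  have hint : IntegrableOn (fun r : ℝ => -fderiv ℝ h (z - r * e) e) (Ioi 0) := by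
    refine Integrable.mono' (integrableOn_one_add_rpow.const_mul C')
      (hcont.clm_apply continuous_const).neg.aestronglyMeasurable ?_
    refine (ae_restrict_iff' measurableSet_Ioi).2 (ae_of_all _ fun r hr => ?_)
    rw [norm_neg]
    refine (ContinuousLinearMap.le_opNorm _ _).trans ?_
    simpa [he, abs_of_pos (mem_Ioi.1 hr)] using hC' z le_rfl (r * e)
  have hlim : Tendsto (fun r : ℝ => h (z - r * e)) atTop (𝓝 0) := by
    have h1 : Tendsto (fun r : ℝ => C * (1 + r) ^ (-(3/2) : ℝ)) atTop (𝓝 0) := by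
      simpa using ((tendsto_rpow_neg_atTop (show (0 : ℝ) < 3/2 by norm_num)).comp
        (tendsto_atTop_add_const_left atTop 1 tendsto_id)).const_mul C
    refine squeeze_zero_norm' ?_ h1
    filter_upwards [eventually_gt_atTop 0] with r hr
    simpa [he, abs_of_pos hr, neg_div] using hC z le_rfl (r * e)
  have hftc := integral_Ioi_of_hasDerivAt_of_tendsto
    (f := fun r : ℝ => h (z - r * e)) (hh.hasDerivAt_ray z e 0).continuousAt.continuousWithinAt
    (fun r _ => hh.hasDerivAt_ray z e r) hint hlim
  rw [integral_neg] at hftc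
  simpa using hftc

lemma SmoothDecay.integral_circle {h : ℂ → ℂ} (hh : SmoothDecay h) (z : ℂ) {r : ℝ} (hr : 0 < r) :
    ∫ θ in Ioo (-π) π, fderiv ℝ h (z - r * Complex.exp (θ * Complex.I))
      (Complex.exp (θ * Complex.I) * Complex.I) = 0 := by
  have hcont : Continuous fun θ : ℝ => fderiv ℝ h (z - r * Complex.exp (θ * Complex.I))
      (Complex.exp (θ * Complex.I) * Complex.I) :=
    (hh.continuous_fderiv_polar z Complex.I).comp (Continuous.prodMk_right r)
  have hftc := intervalIntegral.integral_eq_sub_of_hasDerivAt (a := -π) (b := π)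
    (fun θ _ => hh.hasDerivAt_circle z r θ)
    ((continuous_const.mul hcont).intervalIntegrable _ _)
  rw [intervalIntegral.integral_const_mul, intervalIntegral.integral_of_le (by linarith [pi_pos]),
    integral_Ioc_eq_integral_Ioo] at hftc
  simpa [Complex.exp_neg, Complex.exp_pi_mul_I, hr.ne'] using hftc

lemma SmoothDecay.integral_inv_mul_dbar {h : ℂ → ℂ} (hh : SmoothDecay h) (z : ℂ) :
    ∫ w : ℂ, w⁻¹ * (fderiv ℝ h (z - w) 1 + Complex.I * fderiv ℝ h (z - w) Complex.I)
      = 2 * π * h z := by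
  set A : ℝ × ℝ → ℂ → ℂ := fun p c =>
    fderiv ℝ h (z - p.1 * Complex.exp (p.2 * Complex.I)) (Complex.exp (p.2 * Complex.I) * c)
    with hA
  have hpolar : ∫ w : ℂ, w⁻¹ * (fderiv ℝ h (z - w) 1 + Complex.I * fderiv ℝ h (z - w) Complex.I)
      = ∫ p in Ioi (0 : ℝ) ×ˢ Ioo (-π) π, (A p 1 + Complex.I * A p Complex.I) := by
    rw [← Complex.integral_comp_polarCoord_symm, polarCoord_target]
    refine setIntegral_congr_fun (measurableSet_Ioi.prod measurableSet_Ioo) ?_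
    rintro ⟨r, θ⟩ hp
    have hr : (r : ℂ) ≠ 0 := by exact_mod_cast (mem_Ioi.1 hp.1).ne'
    have he : ‖Complex.exp (θ * Complex.I)‖ = 1 := Complex.norm_exp_ofReal_mul_I θ
    have hsymm : Complex.polarCoord.symm (r, θ) = r * Complex.exp (θ * Complex.I) := by
      rw [Complex.polarCoord_symm_apply, Complex.exp_mul_I]
      simp
    simp only [hsymm, hA, mul_one]
    rw [← clm_add_I_mul_clm_I_polar _ he, mul_inv, Complex.real_smul]
    field_simp
  have hA1 := hh.integrableOn_fderiv_polar z (c := 1) (by simp)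
  have hAI := hh.integrableOn_fderiv_polar z (c := Complex.I) (by simp)
  have hint1 : ∫ p in Ioi (0 : ℝ) ×ˢ Ioo (-π) π, A p 1 = 2 * π * h z := by
    rw [IntegrableOn, Measure.volume_eq_prod, ← Measure.prod_restrict] at hA1
    rw [Measure.volume_eq_prod, ← Measure.prod_restrict, integral_prod_symm _ hA1]
    have : ∀ θ : ℝ, ∫ r in Ioi (0 : ℝ), A (r, θ) 1 = h z := fun θ => by
      simpa [hA] using hh.integral_ray z (Complex.norm_exp_ofReal_mul_I θ)
    rw [integral_congr_ae (ae_of_all _ this), setIntegral_const, measureReal_def, Real.volume_Ioo,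
      ENNReal.toReal_ofReal (by linarith [pi_pos]), Complex.real_smul]
    push_cast
    ring
  have hint2 : ∫ p in Ioi (0 : ℝ) ×ˢ Ioo (-π) π, A p Complex.I = 0 := by
    rw [Measure.volume_eq_prod, setIntegral_prod _ hAI]
    exact setIntegral_eq_zero_of_forall_eq_zero fun r hr => hh.integral_circle z hr
  rw [hpolar, integral_add hA1 (hAI.const_mul Complex.I), integral_const_mul, hint1, hint2]
  ring

lemma SmoothDecay.dbar_cauchyTransform {h : ℂ → ℂ} (hh : SmoothDecay h) (z : ℂ) :
    fderiv ℝ (cauchyTransform h) z 1 + Complex.I * fderiv ℝ (cauchyTransform h) z Complex.I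
      = 2 * π * h z := by
  have hint := hh.smoothDecay_fderiv.integrable_inv_smul_sub z
  have happly : ∀ v : ℂ, fderiv ℝ (cauchyTransform h) z v
      = ∫ w : ℂ, w⁻¹ * fderiv ℝ h (z - w) v := fun v => by
    rw [(hh.hasFDerivAt_cauchyTransform z).fderiv, cauchyTransform,
      ContinuousLinearMap.integral_apply hint]
    rfl
  have hv : ∀ v : ℂ, Integrable fun w : ℂ => w⁻¹ * fderiv ℝ h (z - w) v := fun v =>
    hint.apply_continuousLinearMap v
  rw [happly, happly, ← integral_const_mul, ← integral_add (hv 1) ((hv Complex.I).const_mul _),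
    ← hh.integral_inv_mul_dbar z]
  exact integral_congr_ae (ae_of_all _ fun w => by ring)

end CauchyPompeiu

section Decay

open MeasureTheory Topology

lemma integral_comp_mul_left_complex (f : ℂ → ℝ) {z : ℂ} (hz : z ≠ 0) :
    ∫ w, f w = ‖z‖ ^ 2 * ∫ u, f (z * u) := by
  have hz' : 0 < ‖z‖ := norm_pos_iff.2 hz
  obtain ⟨e, he⟩ : ∃ e : Circle, (e : ℂ) = z / ‖z‖ :=
    ⟨⟨z / ‖z‖, by simp [Submonoid.unitSphere, hz]⟩, rfl⟩
  have hrot := (rotation e).measurePreserving.integral_comp'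
    (f := (rotation e).toMeasurableEquiv) f
  have hscale := Measure.integral_comp_smul volume (fun u => f (rotation e u)) ‖z‖
  have hmul : ∀ u : ℂ, rotation e (‖z‖ • u) = z * u := fun u => by
    have : (‖z‖ : ℂ) ≠ 0 := by exact_mod_cast hz'.ne'
    rw [rotation_apply, he, Complex.real_smul]
    field_simp
  simp only [hmul] at hscale
  rw [hscale, Complex.finrank_real_complex, abs_of_pos (by positivity), ← hrot, smul_eq_mul,
    mul_inv_cancel_left₀ (by positivity)]
  rfl

lemma norm_cauchyTransform_le (h : ℂ → ℂ) {z : ℂ} (hz : z ≠ 0) :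
    ‖z‖ ^ (1/2 : ℝ) * ‖cauchyTransform h z‖ ≤
      ∫ u : ℂ, (‖z * (1 - u)‖ ^ (3/2 : ℝ) * ‖h (z * (1 - u))‖) *
        (‖1 - u‖ ^ (-3/2 : ℝ) * ‖u‖⁻¹) := by
  have hz' : 0 < ‖z‖ := norm_pos_iff.2 hz
  have h1 : ‖cauchyTransform h z‖ ≤ ∫ w : ℂ, ‖w⁻¹ • h (z - w)‖ := norm_integral_le_integral_norm _
  rw [integral_comp_mul_left_complex _ hz] at h1
  refine (mul_le_mul_of_nonneg_left h1 (by positivity)).trans_eq ?_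
  rw [← integral_const_mul, ← integral_const_mul]
  refine integral_congr_ae ?_
  filter_upwards [ae_ne_and_one_sub_ne] with u hu
  have hu1 : 0 < ‖1 - u‖ := norm_pos_iff.2 hu.2
  have hpow : ‖z‖ ^ (3/2 : ℝ) = ‖z‖ ^ (1/2 : ℝ) * ‖z‖ := by
    rw [show (3/2 : ℝ) = 1/2 + 1 by norm_num, rpow_add hz', rpow_one]
  have hcancel : ‖1 - u‖ ^ (3/2 : ℝ) * ‖1 - u‖ ^ (-3/2 : ℝ) = 1 := by
    rw [← rpow_add hu1]
    norm_num
  rw [show z - z * u = z * (1 - u) by ring, norm_smul, norm_inv, norm_mul, norm_mul,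
    mul_rpow hz'.le hu1.le, hpow, mul_inv]
  have hzz : ‖z‖ ^ 2 * ‖z‖⁻¹ = ‖z‖ := by field_simp
  linear_combination (‖z‖ ^ (1/2 : ℝ) * ‖u‖⁻¹ * ‖h (z * (1 - u))‖) * hzz
    - (‖z‖ ^ (1/2 : ℝ) * ‖z‖ * ‖u‖⁻¹ * ‖h (z * (1 - u))‖) * hcancel

lemma SmoothDecay.tendsto_norm_rpow_mul_cauchyTransform {h : ℂ → ℂ} (hh : SmoothDecay h)
    (hlim : Tendsto (fun x => ‖x‖ ^ (3/2 : ℝ) * ‖h x‖) (cocompact ℂ) (𝓝 0)) :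
    Tendsto (fun z => ‖z‖ ^ (1/2 : ℝ) * ‖cauchyTransform h z‖) (cocompact ℂ) (𝓝 0) := by
  obtain ⟨C, hC0, hC⟩ := hh.exists_norm_le
  have hbound : ∀ x, ‖x‖ ^ (3/2 : ℝ) * ‖h x‖ ≤ C := fun x => by
    have hle : ‖x‖ ^ (3/2 : ℝ) ≤ (1 + ‖x‖) ^ (3/2 : ℝ) := by
      gcongr
      linarith
    calc ‖x‖ ^ (3/2 : ℝ) * ‖h x‖
        ≤ (1 + ‖x‖) ^ (3/2 : ℝ) * (C * (1 + ‖x‖) ^ (-3/2 : ℝ)) := by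
          gcongr
          exact hC x
      _ = C * ((1 + ‖x‖) ^ (3/2 : ℝ) * (1 + ‖x‖) ^ (-3/2 : ℝ)) := by ring
      _ = C := by rw [← rpow_add (by positivity)]; norm_num
  have hcont := hh.continuous
  have hmain : Tendsto (fun z : ℂ => ∫ u : ℂ, (‖z * (1 - u)‖ ^ (3/2 : ℝ) * ‖h (z * (1 - u))‖) *
      (‖1 - u‖ ^ (-3/2 : ℝ) * ‖u‖⁻¹)) (cocompact ℂ) (𝓝 (∫ _ : ℂ, (0 : ℝ))) := by
    rw [← Metric.cobounded_eq_cocompact, ← comap_norm_atTop] at hlim ⊢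
    refine tendsto_integral_filter_of_dominated_convergence
      (fun u : ℂ => C * (‖1 - u‖ ^ (-3/2 : ℝ) * ‖u‖⁻¹)) (.of_forall fun z => ?_)
      (.of_forall fun z => ae_of_all _ fun u => ?_)
      (integrable_norm_one_sub_rpow_mul_inv_norm.const_mul C) ?_
    · exact Measurable.aestronglyMeasurable (by fun_prop)
    · rw [Real.norm_of_nonneg (by positivity)]
      gcongr
      exact hbound _
    · filter_upwards [ae_ne_and_one_sub_ne] with u hu
      have hmul : Tendsto (fun z : ℂ => z * (1 - u)) (comap norm atTop) (comap norm atTop) := by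
        refine tendsto_comap_iff.2 ?_
        have hnorm : Tendsto (norm : ℂ → ℝ) (comap norm atTop) atTop := tendsto_comap
        simpa only [Function.comp_def, norm_mul] using
          hnorm.atTop_mul_const (norm_pos_iff.2 hu.2)
      simpa using (hlim.comp hmul).mul_const (‖1 - u‖ ^ (-3/2 : ℝ) * ‖u‖⁻¹)
  rw [integral_zero] at hmain
  refine squeeze_zero' (.of_forall fun z => by positivity) ?_ hmain
  filter_upwards [(Set.finite_singleton (0 : ℂ)).isCompact.compl_mem_cocompact] with z hz
  exact norm_cauchyTransform_le h hz

end Decay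

section ScalarDecay

open Topology

lemma exists_norm_iteratedFDeriv_le {V : Type*} [NormedAddCommGroup V] [NormedSpace ℝ V] [ProperSpace V]
    {f : V → ℝ} (hf : ContDiff ℝ (⊤ : ℕ∞) f) {m : ℕ}
    (hdecay : (fun x => ‖iteratedFDeriv ℝ m f x‖)
      =o[cocompact V] fun x => ‖x‖ ^ ((-3/2 : ℝ) - m)) :
    ∃ C : ℝ, ∀ x, ‖iteratedFDeriv ℝ m f x‖ ≤ C * (1 + ‖x‖) ^ (-3/2 : ℝ) := by
  have hlarge : ∀ᶠ x in cocompact V, 1 ≤ ‖x‖ →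
      ‖iteratedFDeriv ℝ m f x‖ ≤ 2 ^ (3/2 : ℝ) * (1 + ‖x‖) ^ (-3/2 : ℝ) := by
    filter_upwards [hdecay.bound one_pos] with x hx h1
    rw [one_mul, norm_norm, Real.norm_of_nonneg (by positivity)] at hx
    calc ‖iteratedFDeriv ℝ m f x‖ ≤ ‖x‖ ^ ((-3/2 : ℝ) - m) := hx
      _ ≤ ‖x‖ ^ (-3/2 : ℝ) := rpow_le_rpow_of_exponent_le h1 (by simp)
      _ ≤ ((1 + ‖x‖) / 2) ^ (-3/2 : ℝ) :=
        rpow_le_rpow_of_nonpos (by positivity) (by linarith) (by norm_num)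
      _ = 2 ^ (3/2 : ℝ) * (1 + ‖x‖) ^ (-3/2 : ℝ) := by
        rw [div_rpow (by positivity) (by norm_num), div_eq_mul_inv, ← rpow_neg (by norm_num),
          mul_comm]
        norm_num
  have hpow : ∀ x : V, (1 + ‖x‖) ^ (3/2 : ℝ) * (1 + ‖x‖) ^ (-3/2 : ℝ) = 1 := fun x => by
    rw [← rpow_add (by positivity)]
    norm_num
  have hcont : Continuous fun x => ‖iteratedFDeriv ℝ m f x‖ * (1 + ‖x‖) ^ (3/2 : ℝ) :=
    (hf.continuous_iteratedFDeriv (by exact_mod_cast le_top)).norm.mul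
      (by fun_prop (disch := norm_num))
  obtain ⟨K, hK, hKlarge⟩ :=
    mem_cocompact.1 (hlarge.and (tendsto_norm_cocompact_atTop.eventually_ge_atTop 1))
  obtain ⟨B, hB⟩ := hK.exists_bound_of_continuousOn hcont.continuousOn
  refine ⟨max B (2 ^ (3/2 : ℝ)), fun x => ?_⟩
  by_cases hx : x ∈ K
  · calc ‖iteratedFDeriv ℝ m f x‖
        = (‖iteratedFDeriv ℝ m f x‖ * (1 + ‖x‖) ^ (3/2 : ℝ)) * (1 + ‖x‖) ^ (-3/2 : ℝ) := by
          rw [mul_assoc, hpow, mul_one]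
      _ ≤ max B (2 ^ (3/2 : ℝ)) * (1 + ‖x‖) ^ (-3/2 : ℝ) := by
          gcongr
          exact (le_abs_self _).trans ((hB x hx).trans (le_max_left _ _))
  · obtain ⟨h1, h2⟩ := hKlarge hx
    refine (h1 h2).trans ?_
    gcongr
    exact le_max_right _ _

end ScalarDecay

section Main

open Topology

/-- The standard isometry `ℂ ≃ ℝ²`. -/
def complexToPlane : ℂ ≃ₗᵢ[ℝ] EuclideanSpace ℝ (Fin 2) := Complex.orthonormalBasisOneI.repr

lemma complexToPlane_zero (z : ℂ) : complexToPlane z 0 = z.re := by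
  simp [complexToPlane]

lemma complexToPlane_one (z : ℂ) : complexToPlane z 1 = z.im := by
  simp [complexToPlane]

lemma complexToPlane_symm_single_zero :
    complexToPlane.symm (EuclideanSpace.single 0 1) = 1 := by
  simp [complexToPlane]

lemma complexToPlane_symm_single_one :
    complexToPlane.symm (EuclideanSpace.single 1 1) = Complex.I := by
  simp [complexToPlane]

lemma pd2_clm_comp_complexToPlane_symm {f : ℂ → ℂ} {x : EuclideanSpace ℝ (Fin 2)}
    (hf : DifferentiableAt ℝ f (complexToPlane.symm x)) (ℓ : ℂ →L[ℝ] ℝ) (i : Fin 2) :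
    pd2 i (fun y => ℓ (f (complexToPlane.symm y))) x =
      ℓ (fderiv ℝ f (complexToPlane.symm x)
        (complexToPlane.symm (EuclideanSpace.single i 1))) := by
  have h := ℓ.hasFDerivAt.comp x (hf.hasFDerivAt.comp x
    complexToPlane.symm.toContinuousLinearEquiv.hasFDerivAt)
  exact congrArg (fun D : EuclideanSpace ℝ (Fin 2) →L[ℝ] ℝ => D (EuclideanSpace.single i 1))
    h.fderiv

lemma confKilling_conj {f : ℂ → ℂ} {x : EuclideanSpace ℝ (Fin 2)}
    (hf : DifferentiableAt ℝ f (complexToPlane.symm x)) {w : ℂ}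
    (hw : fderiv ℝ f (complexToPlane.symm x) 1 +
      Complex.I * fderiv ℝ f (complexToPlane.symm x) Complex.I = w) (i j : Fin 2) :
    confKilling (fun y => complexToPlane (f (complexToPlane.symm y))) x i j =
      !![w.re, w.im; w.im, -w.re] i j := by
  subst hw
  have hre := pd2_clm_comp_complexToPlane_symm hf Complex.reCLM
  have him := pd2_clm_comp_complexToPlane_symm hf Complex.imCLM
  simp only [Complex.reCLM_apply, Complex.imCLM_apply] at hre him
  fin_cases i <;> fin_cases j <;>
  · simp [confKilling, complexToPlane_zero, complexToPlane_one, hre, him,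
      complexToPlane_symm_single_zero, complexToPlane_symm_single_one]
    try ring

lemma tendsto_complexToPlane_cocompact :
    Tendsto complexToPlane (cocompact ℂ) (cocompact (EuclideanSpace ℝ (Fin 2))) :=
  complexToPlane.toHomeomorph.isClosedEmbedding.tendsto_cocompact

lemma tendsto_complexToPlane_symm_cocompact :
    Tendsto complexToPlane.symm (cocompact (EuclideanSpace ℝ (Fin 2))) (cocompact ℂ) :=
  complexToPlane.symm.toHomeomorph.isClosedEmbedding.tendsto_cocompact

lemma eq_of_dbar_eq_of_tendsto_zero {f g : ℂ → ℂ} (hf : Differentiable ℝ f)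
    (hg : Differentiable ℝ g)
    (hdbar : ∀ z, fderiv ℝ f z 1 + Complex.I * fderiv ℝ f z Complex.I =
      fderiv ℝ g z 1 + Complex.I * fderiv ℝ g z Complex.I)
    (hf0 : Tendsto f (cocompact ℂ) (𝓝 0)) (hg0 : Tendsto g (cocompact ℂ) (𝓝 0)) : f = g := by
  have hd : Differentiable ℂ (f - g) := fun z => by
    refine differentiableAt_complex_iff_differentiableAt_real.2 ⟨(hf z).sub (hg z), ?_⟩
    rw [fderiv_sub (hf z) (hg z)]
    simp only [sub_apply, smul_eq_mul]
    linear_combination (-Complex.I) * hdbar z +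
      (fderiv ℝ f z Complex.I - fderiv ℝ g z Complex.I) * Complex.I_sq
  have h0 : Tendsto (f - g) (cocompact ℂ) (𝓝 0) := by
    simpa only [sub_zero] using! hf0.sub hg0
  exact funext fun z => sub_eq_zero.1 (hd.apply_eq_of_tendsto_cocompact z h0)

lemma smoothDecay_smul_comp_complexToPlane {t : EuclideanSpace ℝ (Fin 2) → ℝ}
    (ht : ContDiff ℝ (⊤ : ℕ∞) t)
    (hdecay : ∀ m : ℕ, (fun x => ‖iteratedFDeriv ℝ m t x‖)
      =o[cocompact (EuclideanSpace ℝ (Fin 2))] fun x => ‖x‖ ^ ((-3/2 : ℝ) - m)) (c : ℂ) :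
    SmoothDecay fun z => t (complexToPlane z) • c := by
  have hcomp : ContDiff ℝ (⊤ : ℕ∞) (t ∘ complexToPlane) := ht.comp complexToPlane.contDiff
  refine ⟨hcomp.smul contDiff_const, fun m => ?_⟩
  obtain ⟨C, hC⟩ := exists_norm_iteratedFDeriv_le ht (hdecay m)
  refine ⟨‖ContinuousLinearMap.toSpanSingleton ℝ c‖ * C, fun z => ?_⟩
  have hle := (ContinuousLinearMap.toSpanSingleton ℝ c).norm_iteratedFDeriv_comp_left
    (f := t ∘ complexToPlane) (x := z) (n := m) hcomp.contDiffAt (by exact_mod_cast le_top)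
  rw [complexToPlane.norm_iteratedFDeriv_comp_right] at hle
  refine hle.trans ?_
  rw [mul_assoc]
  gcongr
  simpa using hC (complexToPlane z)

lemma SmoothDecay.add {h k : ℂ → ℂ} (hh : SmoothDecay h) (hk : SmoothDecay k) :
    SmoothDecay fun z => h z + k z := by
  refine ⟨hh.contDiff.add hk.contDiff, fun m => ?_⟩
  obtain ⟨C, hC⟩ := hh.2 m
  obtain ⟨C', hC'⟩ := hk.2 m
  refine ⟨C + C', fun x => ?_⟩
  rw [fun_iteratedFDeriv_add_apply (hh.contDiff.contDiffAt.of_le (by exact_mod_cast le_top))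
    (hk.contDiff.contDiffAt.of_le (by exact_mod_cast le_top)), add_mul]
  exact (norm_add_le _ _).trans (add_le_add (hC x) (hC' x))

lemma tendsto_norm_rpow_mul_of_isLittleO {t : EuclideanSpace ℝ (Fin 2) → ℝ}
    (hdecay : (fun x => ‖iteratedFDeriv ℝ 0 t x‖)
      =o[cocompact (EuclideanSpace ℝ (Fin 2))] fun x => ‖x‖ ^ ((-3/2 : ℝ) - (0 : ℕ))) (c : ℂ) :
    Tendsto (fun z : ℂ => ‖z‖ ^ (3/2 : ℝ) * ‖t (complexToPlane z) • c‖) (cocompact ℂ) (𝓝 0) := by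
  have h := ((hdecay.tendsto_div_nhds_zero).comp tendsto_complexToPlane_cocompact).mul_const ‖c‖
  rw [zero_mul] at h
  refine h.congr fun z => ?_
  have hneg : ‖z‖ ^ ((-3/2 : ℝ) - (0 : ℕ)) = (‖z‖ ^ (3/2 : ℝ))⁻¹ := by
    rw [← rpow_neg (norm_nonneg z)]
    norm_num
  simp only [Function.comp_apply, LinearIsometryEquiv.norm_map, hneg, norm_iteratedFDeriv_zero,
    div_inv_eq_mul, norm_smul]
  ring

end Main

theorem stmt2
    (T : EuclideanSpace ℝ (Fin 2) → Matrix (Fin 2) (Fin 2) ℝ)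
    (hTsmooth : ∀ i j, ContDiff ℝ (⊤ : ℕ∞) fun x => T x i j)
    (hTsym : ∀ x, T x 0 1 = T x 1 0)
    (hTtracefree : ∀ x, T x 0 0 + T x 1 1 = 0)
    (hTdecay : ∀ i j, ∀ m : ℕ,
      (fun x => ‖iteratedFDeriv ℝ m (fun y => T y i j) x‖)
        =o[cocompact (EuclideanSpace ℝ (Fin 2))] fun x => ‖x‖ ^ ((-3/2 : ℝ) - m)) :
    ∃ β : EuclideanSpace ℝ (Fin 2) → EuclideanSpace ℝ (Fin 2),
      (ContDiff ℝ (⊤ : ℕ∞) β ∧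
        Tendsto β (cocompact (EuclideanSpace ℝ (Fin 2))) (nhds 0) ∧
        (∀ x, ∀ i j, confKilling β x i j = T x i j)) ∧
      ((fun x => ‖β x‖)
        =o[cocompact (EuclideanSpace ℝ (Fin 2))] fun x => ‖x‖ ^ (-1/2 : ℝ)) ∧
      (∀ β' : EuclideanSpace ℝ (Fin 2) → EuclideanSpace ℝ (Fin 2),
        (ContDiff ℝ (⊤ : ℕ∞) β' ∧
          Tendsto β' (cocompact (EuclideanSpace ℝ (Fin 2))) (nhds 0) ∧
          (∀ x, ∀ i j, confKilling β' x i j = T x i j)) → β' = β) := by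
  have hT : ∀ x, T x =
      !![T x 0 0, T x 0 1; T x 0 1, -T x 0 0] := fun x => by
    ext i j
    have h1 := hTsym x
    have h2 := hTtracefree x
    fin_cases i <;> fin_cases j <;> simp <;> linarith
  set h : ℂ → ℂ := fun z => T (complexToPlane z) 0 0 • (1/2 : ℂ) +
    T (complexToPlane z) 0 1 • (Complex.I / 2) with h_def
  have hh : SmoothDecay h :=
    (smoothDecay_smul_comp_complexToPlane (hTsmooth 0 0) (hTdecay 0 0) _).add
      (smoothDecay_smul_comp_complexToPlane (hTsmooth 0 1) (hTdecay 0 1) _)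
  have hlim : Tendsto (fun z => ‖z‖ ^ (3/2 : ℝ) * ‖h z‖) (cocompact ℂ) (nhds 0) := by
    have hsum := (tendsto_norm_rpow_mul_of_isLittleO (hTdecay 0 0 0) (1/2 : ℂ)).add
      (tendsto_norm_rpow_mul_of_isLittleO (hTdecay 0 1 0) (Complex.I / 2))
    rw [add_zero] at hsum
    refine squeeze_zero (fun z => by positivity) (fun z => ?_) hsum
    rw [← mul_add]
    gcongr
    exact norm_add_le _ _
  set f : ℂ → ℂ := fun z => (π : ℂ)⁻¹ * cauchyTransform h z with hf_def
  have hf : ContDiff ℝ (⊤ : ℕ∞) f := contDiff_const.mul hh.contDiff_cauchyTransform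
  have hfd : Differentiable ℝ f := hf.differentiable (by simp)
  have hdbar : ∀ z, fderiv ℝ f z 1 + Complex.I * fderiv ℝ f z Complex.I =
      T (complexToPlane z) 0 0 + T (complexToPlane z) 0 1 * Complex.I := fun z => by
    have hpi : (π : ℂ) ≠ 0 := by exact_mod_cast pi_ne_zero
    have hfz : fderiv ℝ f z = (π : ℂ)⁻¹ • fderiv ℝ (cauchyTransform h) z :=
      ((hh.hasFDerivAt_cauchyTransform z).differentiableAt.hasFDerivAt.const_mul _).fderiv
    simp only [hfz, smul_apply, smul_eq_mul]
    calc _ = (π : ℂ)⁻¹ * (2 * π * h z) := by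
          rw [← hh.dbar_cauchyTransform z]
          ring
      _ = _ := by
          simp only [h_def, Complex.real_smul]
          field_simp
  have hlittle : (fun x => ‖complexToPlane (f (complexToPlane.symm x))‖)
      =o[cocompact (EuclideanSpace ℝ (Fin 2))] fun x => ‖x‖ ^ (-1/2 : ℝ) := by
    have hc := ((hh.tendsto_norm_rpow_mul_cauchyTransform hlim).const_mul π⁻¹).comp
      tendsto_complexToPlane_symm_cocompact
    rw [mul_zero] at hc
    refine (isLittleO_iff_tendsto' ?_).2 (hc.congr fun x => ?_)
    · filter_upwards [(Set.finite_singleton 0).isCompact.compl_mem_cocompact] with x hx h0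
      exact absurd h0 (rpow_pos_of_pos (norm_pos_iff.2 hx) _).ne'
    · rw [neg_div, rpow_neg (norm_nonneg x), div_inv_eq_mul]
      simp only [hf_def, Function.comp_apply, LinearIsometryEquiv.norm_map, norm_mul, norm_inv,
        Complex.norm_real, Real.norm_of_nonneg pi_pos.le]
      ring
  have hzero : Tendsto (fun x => complexToPlane (f (complexToPlane.symm x)))
      (cocompact (EuclideanSpace ℝ (Fin 2))) (nhds 0) := by
    refine tendsto_zero_iff_norm_tendsto_zero.2 (hlittle.trans_tendsto ?_)
    simpa [neg_div, Function.comp_def] using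
      (tendsto_rpow_neg_atTop (show (0 : ℝ) < 1/2 by norm_num)).comp
        (tendsto_norm_cocompact_atTop (E := EuclideanSpace ℝ (Fin 2)))
  have hf0 : Tendsto f (cocompact ℂ) (nhds 0) := by
    have := (complexToPlane.symm.continuous.tendsto 0).comp
      (hzero.comp tendsto_complexToPlane_cocompact)
    simpa [Function.comp_def] using this
  refine ⟨fun x => complexToPlane (f (complexToPlane.symm x)),
    ⟨complexToPlane.contDiff.comp (hf.comp complexToPlane.symm.contDiff), hzero, fun x i j => ?_⟩,
    hlittle, ?_⟩
  · rw [confKilling_conj (hfd _) (hdbar _), hT x]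
    simp
  · rintro β' ⟨hβ', hβ'0, hβ'T⟩
    set g : ℂ → ℂ := fun z => complexToPlane.symm (β' (complexToPlane z)) with hg_def
    have hgd : Differentiable ℝ g :=
      (complexToPlane.symm.contDiff.comp (hβ'.comp complexToPlane.contDiff)).differentiable
        (by simp)
    have hβ'g : β' = fun x => complexToPlane (g (complexToPlane.symm x)) := by
      simp [hg_def]
    have hg0 : Tendsto g (cocompact ℂ) (nhds 0) := by
      simpa [Function.comp_def] using (complexToPlane.symm.continuous.tendsto 0).comp
        (hβ'0.comp tendsto_complexToPlane_cocompact)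
    have hgdbar : ∀ z, fderiv ℝ g z 1 + Complex.I * fderiv ℝ g z Complex.I =
        T (complexToPlane z) 0 0 + T (complexToPlane z) 0 1 * Complex.I := fun z => by
      have hconf := confKilling_conj (x := complexToPlane z) (hgd _) rfl
      rw [← hβ'g, LinearIsometryEquiv.symm_apply_apply] at hconf
      simp only [hβ'T] at hconf
      have h00 := hconf 0 0
      have h01 := hconf 0 1
      simp only [Matrix.of_apply, Matrix.cons_val_zero, Matrix.cons_val_one] at h00 h01
      rw [h00, h01, Complex.re_add_im]
    rw [hβ'g, eq_of_dbar_eq_of_tendsto_zero hgd hfd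
      (fun z => (hgdbar z).trans (hdbar z).symm) hg0 hf0]

end
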